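/- Let d ≥ 2 and m ≥ 2, let Π_1, …, Π_m be parallel hyperplanes in E^{d+1} with Π_j above Π_i for j > i, let P_i ⊂ Π_i be finite sets with each 𝒫_i = conv(P_i) d-dimensional, P = P_1 ∪ … ∪ P_m, 𝒫 = conv(P), 𝒫_1 = 𝒫 ∩ Π_1 and 𝒫_m = 𝒫 ∩ Π_m. Let y be a point beyond the facet 𝒫_1 and beneath every other facet of 𝒫, let z be a point beyond the facet 𝒫_m and beneath every other facet of 𝒫, and let Q = conv(P ∪ {y, z}). Then for every 0 ≤ k ≤ d: f_k(Q) = f_k(𝒫) + f_{k−1}(∂𝒫_1) + f_{k−1}(∂𝒫_m) − α_k, where f_{k−1}(∂𝒫_ℓ) denotes the number of (k−1)-dimensional proper exposed faces of 𝒫_ℓ, with the convention f_{−1}(∂𝒫_ℓ) = 1 (counting the empty face), and where α_k = 0 for 0 ≤ k < d and α_d = 2. (Equation (6) in the proof of Lemma 2.5.) -/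

import Mathlib

/-!
The faces of `Q = conv (P ∪ {y, z})` are determined from those of `𝒫 = conv P`.

A full-dimensional polytope is cut out by its facets: from a point outside, a segment to a
suitably generic interior point enters the polytope through the relative interior of a facet
(`exists_facet`, `mem_interior_of_facets`). Hence, if a hyperplane supports `𝒫` at some point off
the bottom facet, then `y` lies strictly on the side of `𝒫` (`Cfg.lt_y`), and symmetrically for
`z` and the top facet; moreover the segment `[y, z]` meets the interior of `𝒫`
(`Cfg.segment_interior`), so that no proper face of `Q` contains both apexes. On the other hand,
a hyperplane through a proper face `G` of the bottom facet can be tilted about `G` until it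
passes through `y`, or stopped a little earlier (`Cfg.tilt`), so that both `G` and the pyramid
`conv (G ∪ {y})` are faces of `Q` (`Cfg.exposed_of_slab`).

Consequently the proper faces of `Q` are the proper faces of `𝒫` other than the two parallel
facets, the pyramids with apex `y` over the proper faces of the bottom facet (the empty face
included), and the pyramids with apex `z` over those of the top facet (`Cfg.faces_Q`,
`Cfg.exposed_base`, `Cfg.exposed_of_apexFaces`). A pyramid has dimension one more than its base,
so counting by dimension gives the formula; the two parallel facets that are lost account for
`α_d = 2`. The statements about `z` follow from those about `y` by reversing the direction
(`Cfg.symm`).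
-/

open Set Pointwise RealInnerProductSpace

/-- The dimension of the affine hull of a set. -/
noncomputable def adim {N : ℕ} (F : Set (EuclideanSpace ℝ (Fin N))) : ℕ :=
  Module.finrank ℝ (vectorSpan ℝ F)

/-- The number of `k`-dimensional nonempty exposed faces of `C`. -/
noncomputable def fCount {N : ℕ} (C : Set (EuclideanSpace ℝ (Fin N))) (k : ℕ) : ℕ :=
  {F : Set (EuclideanSpace ℝ (Fin N)) |
    IsExposed ℝ C F ∧ F.Nonempty ∧ adim F = k}.ncard

/-- The number of `k`-dimensional nonempty *proper* exposed faces of `C` (faces of the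
boundary complex `∂C`). -/
noncomputable def bCount {N : ℕ} (C : Set (EuclideanSpace ℝ (Fin N))) (k : ℕ) : ℕ :=
  {F : Set (EuclideanSpace ℝ (Fin N)) |
    IsExposed ℝ C F ∧ F.Nonempty ∧ F ≠ C ∧ adim F = k}.ncard

/-- `F` is a facet of `C`: an exposed face of dimension one less than `C`. -/
def IsFacetOf {N : ℕ} (C F : Set (EuclideanSpace ℝ (Fin N))) : Prop :=
  IsExposed ℝ C F ∧ F.Nonempty ∧ adim F + 1 = adim C

/-- `p` is beyond the facet `F` of `C`. -/
def IsBeyond {N : ℕ} (C F : Set (EuclideanSpace ℝ (Fin N)))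
    (p : EuclideanSpace ℝ (Fin N)) : Prop :=
  ∀ x ∈ C, x ∉ (affineSpan ℝ F : Set (EuclideanSpace ℝ (Fin N))) →
    (affineSpan ℝ F).SOppSide p x

/-- `p` is beneath the facet `F` of `C`. -/
def IsBeneath {N : ℕ} (C F : Set (EuclideanSpace ℝ (Fin N)))
    (p : EuclideanSpace ℝ (Fin N)) : Prop :=
  ∀ x ∈ C, x ∉ (affineSpan ℝ F : Set (EuclideanSpace ℝ (Fin N))) →
    (affineSpan ℝ F).SSameSide p x

/-! ### Faces cut out by linear functionals -/

section Faces

variable {N : ℕ}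

lemma le_on_convexHull {S : Set (EuclideanSpace ℝ (Fin N))} {l : StrongDual ℝ (EuclideanSpace ℝ (Fin N))} {M : ℝ} (h : ∀ x ∈ S, l x ≤ M) :
    ∀ x ∈ convexHull ℝ S, l x ≤ M := fun _ hx =>
  convexHull_min (s := S) (t := {x | l x ≤ M}) h
    (convex_halfSpace_le l.toLinearMap.isLinear M) hx

lemma sep_convexHull {S : Set (EuclideanSpace ℝ (Fin N))} {l : StrongDual ℝ (EuclideanSpace ℝ (Fin N))} {M : ℝ} (h : ∀ x ∈ S, l x ≤ M) :
    {x ∈ convexHull ℝ S | l x = M} = convexHull ℝ {x ∈ S | l x = M} := by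
  apply Subset.antisymm
  · -- The union of the open halfspace `l < M` with the right-hand side is convex and contains `S`.
    have hconv : Convex ℝ ({x | l x < M} ∪ convexHull ℝ {x ∈ S | l x = M}) := by
      have hT : ∀ x ∈ convexHull ℝ {x ∈ S | l x = M}, l x ≤ M :=
        le_on_convexHull fun x hx => hx.2.le
      intro x hx x' hx' α β hα hβ hαβ
      by_cases hlt : l (α • x + β • x') < M
      · exact Or.inl hlt
      rcases hα.eq_or_lt with rfl | hα
      · have : β = 1 := by linarith
        subst this; simpa using hx'
      rcases hβ.eq_or_lt with rfl | hβ
      · have : α = 1 := by linarith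
        subst this; simpa using hx
      have e : l (α • x + β • x') = α * l x + β * l x' := by simp
      have eM : M = α * M + β * M := by rw [← add_mul, hαβ, one_mul]
      rcases hx with hx | hx <;> rcases hx' with hx' | hx'
      · simp only [mem_ofPred_eq] at hx hx'
        exact absurd (by rw [e]; nlinarith) hlt
      · simp only [mem_ofPred_eq] at hx
        have := hT _ hx'
        exact absurd (by rw [e]; nlinarith) hlt
      · simp only [mem_ofPred_eq] at hx'
        have := hT _ hx
        exact absurd (by rw [e]; nlinarith) hlt
      · exact Or.inr (convex_convexHull ℝ _ hx hx' hα.le hβ.le hαβ)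
    rintro x ⟨hx, hxM⟩
    have := convexHull_min (s := S) (fun s hs => ?_) hconv hx
    · exact this.resolve_left fun h' => absurd hxM (ne_of_lt h')
    · rcases (h s hs).lt_or_eq with h' | h'
      · exact Or.inl h'
      · exact Or.inr (subset_convexHull ℝ _ ⟨hs, h'⟩)
  · intro x hx
    refine ⟨convexHull_mono (fun s hs => hs.1) hx, le_antisymm
      (le_on_convexHull (fun s hs => hs.2.le) x hx) ?_⟩
    have := le_on_convexHull (l := -l) (M := -M) (fun s (hs : s ∈ {x ∈ S | l x = M}) => by
      simp [hs.2]) x hx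
    simpa using this

lemma isExposed_sep {C : Set (EuclideanSpace ℝ (Fin N))} {l : StrongDual ℝ (EuclideanSpace ℝ (Fin N))} {M : ℝ} (h : ∀ x ∈ C, l x ≤ M) :
    IsExposed ℝ C {x ∈ C | l x = M} := by
  rintro ⟨w, hw, hwM⟩
  refine ⟨l, ?_⟩
  ext x
  refine ⟨fun hx => ⟨hx.1, fun y hy => by rw [hx.2]; exact h y hy⟩,
    fun hx => ⟨hx.1, le_antisymm (h x hx.1) ?_⟩⟩
  rw [← hwM]; exact hx.2 w hw

lemma IsExposed.exists_sep {C F : Set (EuclideanSpace ℝ (Fin N))} (h : IsExposed ℝ C F) (hne : F.Nonempty) :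
    ∃ (l : StrongDual ℝ (EuclideanSpace ℝ (Fin N))) (M : ℝ), (∀ x ∈ C, l x ≤ M) ∧ F = {x ∈ C | l x = M} := by
  obtain ⟨l, hl⟩ := h hne
  obtain ⟨w, hw⟩ := hne
  rw [hl] at hw
  refine ⟨l, l w, hw.2, ?_⟩
  rw [hl]
  ext x
  exact ⟨fun hx => ⟨hx.1, le_antisymm (hw.2 x hx.1) (hx.2 w hw.1)⟩,
    fun hx => ⟨hx.1, fun y hy => by rw [hx.2]; exact hw.2 y hy⟩⟩

lemma finite_faces {S : Set (EuclideanSpace ℝ (Fin N))} (hS : S.Finite) :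
    {F | IsExposed ℝ (convexHull ℝ S) F ∧ F.Nonempty}.Finite := by
  refine (hS.finite_subsets.image (convexHull ℝ)).subset ?_
  rintro F ⟨hF, hne⟩
  obtain ⟨l, M, hl, rfl⟩ := hF.exists_sep hne
  refine ⟨{x ∈ S | l x = M}, fun x hx => hx.1, ?_⟩
  exact (sep_convexHull fun x hx => hl x (subset_convexHull ℝ _ hx)).symm

lemma lt_of_mem_interior {C : Set (EuclideanSpace ℝ (Fin N))} {l : StrongDual ℝ (EuclideanSpace ℝ (Fin N))} {M : ℝ} (h : ∀ x ∈ C, l x ≤ M)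
    (hl : l ≠ 0) {x : EuclideanSpace ℝ (Fin N)} (hx : x ∈ interior C) : l x < M := by
  have h1 : l '' interior C ⊆ interior (Iic M) :=
    interior_maximal (image_subset_iff.2 fun a ha => h a (interior_subset ha))
      (l.isOpenMap_of_ne_zero hl _ isOpen_interior)
  rw [interior_Iic] at h1
  exact h1 ⟨x, hx, rfl⟩

lemma adim_mono {F G : Set (EuclideanSpace ℝ (Fin N))} (h : F ⊆ G) : adim F ≤ adim G :=
  Submodule.finrank_mono (vectorSpan_mono ℝ h)

lemma vectorSpan_le_ker {F : Set (EuclideanSpace ℝ (Fin N))} {l : StrongDual ℝ (EuclideanSpace ℝ (Fin N))} {M : ℝ} (h : ∀ x ∈ F, l x = M) :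
    vectorSpan ℝ F ≤ l.toLinearMap.ker := by
  rw [vectorSpan_def, Submodule.span_le]
  rintro _ ⟨a, ha, b, hb, rfl⟩
  simp [h a ha, h b hb]

lemma eq_on_affineSpan {F : Set (EuclideanSpace ℝ (Fin N))} {l : StrongDual ℝ (EuclideanSpace ℝ (Fin N))} {M : ℝ} (h : ∀ x ∈ F, l x = M) :
    ∀ x ∈ affineSpan ℝ F, l x = M := by
  intro x hx
  refine affineSpan_induction (p := fun x => l x = M) hx h ?_
  intro c u v w hu hv hw
  simp [hu, hv, hw]

lemma eq_zero_of_adim {F : Set (EuclideanSpace ℝ (Fin N))} {l : StrongDual ℝ (EuclideanSpace ℝ (Fin N))} {M : ℝ} (h : ∀ x ∈ F, l x = M)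
    (hF : N ≤ adim F) : l = 0 := by
  have h1 : vectorSpan ℝ F = ⊤ := by
    apply Submodule.eq_top_of_finrank_eq
    apply le_antisymm (Submodule.finrank_le _)
    simpa [adim] using hF
  have h2 := vectorSpan_le_ker h
  rw [h1, top_le_iff] at h2
  ext x
  have : x ∈ l.toLinearMap.ker := by rw [h2]; trivial
  simpa using this

/-- A point beneath a face is strictly on the inner side of every hyperplane supporting it. -/
lemma IsBeneath.lt {C F : Set (EuclideanSpace ℝ (Fin N))} {p : EuclideanSpace ℝ (Fin N)} (hp : IsBeneath C F p) {l : StrongDual ℝ (EuclideanSpace ℝ (Fin N))} {M : ℝ}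
    (hF : ∀ x ∈ F, l x = M) {x : EuclideanSpace ℝ (Fin N)} (hx : x ∈ C) (hlt : l x < M) : l p < M := by
  have hA := eq_on_affineSpan hF
  obtain ⟨⟨p₁, hp₁, p₂, hp₂, hr⟩, hpA, hxA⟩ := hp x hx fun h => hlt.ne (hA x h)
  rcases hr with h | h | ⟨r, s, hr, hs, h⟩
  · exact absurd (by rw [vsub_eq_zero_iff_eq] at h; rwa [h]) hpA
  · exact absurd (by rw [vsub_eq_zero_iff_eq] at h; rwa [h]) hxA
  · have := congrArg l h
    simp only [vsub_eq_sub, map_smul, map_sub, smul_eq_mul, hA p₁ hp₁, hA p₂ hp₂] at this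
    have h3 : r * (l p - M) < 0 := by rw [this]; exact mul_neg_of_pos_of_neg hs (by linarith)
    nlinarith

/-- A point beyond a face is strictly on the outer side of every hyperplane supporting it. -/
lemma IsBeyond.lt {C F : Set (EuclideanSpace ℝ (Fin N))} {p : EuclideanSpace ℝ (Fin N)} (hp : IsBeyond C F p) {l : StrongDual ℝ (EuclideanSpace ℝ (Fin N))} {M : ℝ}
    (hF : ∀ x ∈ F, l x = M) {x : EuclideanSpace ℝ (Fin N)} (hx : x ∈ C) (hlt : l x < M) : M < l p := by
  have hA := eq_on_affineSpan hF
  obtain ⟨⟨p₁, hp₁, p₂, hp₂, hr⟩, hpA, hxA⟩ := hp x hx fun h => hlt.ne (hA x h)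
  rcases hr with h | h | ⟨r, s, hr, hs, h⟩
  · exact absurd (by rw [vsub_eq_zero_iff_eq] at h; rwa [h]) hpA
  · exact absurd (by rw [vsub_eq_zero_iff_eq] at h; rwa [← h]) hxA
  · have := congrArg l h
    simp only [vsub_eq_sub, map_smul, map_sub, smul_eq_mul, hA p₁ hp₁, hA p₂ hp₂] at this
    have h3 : 0 < r * (l p - M) := by rw [this]; exact mul_pos hs (by linarith)
    nlinarith

lemma adim_convexHull (F : Set (EuclideanSpace ℝ (Fin N))) : adim (convexHull ℝ F) = adim F := by
  unfold adim
  rw [← direction_affineSpan, affineSpan_convexHull, direction_affineSpan]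

lemma adim_pyramid {F : Set (EuclideanSpace ℝ (Fin N))} (hF : F.Nonempty) {l : StrongDual ℝ (EuclideanSpace ℝ (Fin N))} {M : ℝ}
    (h : ∀ x ∈ F, l x = M) {y : EuclideanSpace ℝ (Fin N)} (hy : l y ≠ M) :
    adim (convexHull ℝ (insert y F)) = adim F + 1 := by
  rw [adim_convexHull]
  apply le_antisymm (finrank_vectorSpan_insert_le_set ℝ F y)
  obtain ⟨x, hx⟩ := hF
  refine Submodule.finrank_lt_finrank_of_lt (lt_of_le_of_ne
    (vectorSpan_mono ℝ (subset_insert y F)) fun he => ?_)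
  have h1 : y -ᵥ x ∈ vectorSpan ℝ (insert y F) :=
    vsub_mem_vectorSpan ℝ (mem_insert y F) (mem_insert_of_mem y hx)
  rw [← he] at h1
  have := vectorSpan_le_ker h h1
  simp [h x hx, sub_eq_zero, hy] at this

end Faces

/-! ### Facets of a full-dimensional polytope bound it -/

section Facets

variable {N : ℕ}

lemma adim_of_interior {K : Set (EuclideanSpace ℝ (Fin N))} (hK : (interior K).Nonempty) : adim K = N := by
  have h1 : affineSpan ℝ (interior K) = ⊤ := isOpen_interior.affineSpan_eq_top hK
  have h2 : affineSpan ℝ K = ⊤ := top_le_iff.1 (h1 ▸ affineSpan_mono ℝ interior_subset)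
  unfold adim
  rw [← direction_affineSpan, h2, AffineSubspace.direction_top, finrank_top,
    finrank_euclideanSpace_fin]

lemma affineSpan_insert_ne_top {F : Set (EuclideanSpace ℝ (Fin N))} (hF : adim F + 1 < N) (w : EuclideanSpace ℝ (Fin N)) :
    affineSpan ℝ (insert w F) ≠ ⊤ := by
  intro h
  have h1 := finrank_vectorSpan_insert_le_set ℝ F w
  rw [← direction_affineSpan, h, AffineSubspace.direction_top, finrank_top,
    finrank_euclideanSpace_fin] at h1
  unfold adim at hF
  omega

/-- A point `w` outside a full-dimensional polytope `K` fails to satisfy the inequality of some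
facet strictly, however that inequality is written.
The facet is found by walking from `w` to an interior point `q` which avoids the affine hull of
`w` and each face of dimension less than `N - 1`: the walk enters `K` at a point that no such
face contains. -/
lemma exists_facet {S : Set (EuclideanSpace ℝ (Fin N))} (hS : S.Finite) (hintr : (interior (convexHull ℝ S)).Nonempty)
    {w : EuclideanSpace ℝ (Fin N)} (hw : w ∉ convexHull ℝ S) :
    ∃ F, IsFacetOf (convexHull ℝ S) F ∧ ∀ (l : StrongDual ℝ (EuclideanSpace ℝ (Fin N))) (M : ℝ),
      (∀ x ∈ convexHull ℝ S, l x ≤ M) → l ≠ 0 → (∀ x ∈ F, l x = M) → M ≤ l w := by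
  set K := convexHull ℝ S with hK
  have hKconv : Convex ℝ K := convex_convexHull ℝ S
  have hKclosed : IsClosed K := hS.isClosed_convexHull ℝ
  set L : Set (Set (EuclideanSpace ℝ (Fin N))) := {F | (IsExposed ℝ K F ∧ F.Nonempty) ∧ adim F + 1 < N} with hL
  have hLfin : L.Finite := (finite_faces hS).subset fun F hF => hF.1
  have hnull : MeasureTheory.volume
      (⋃ F ∈ L, (affineSpan ℝ (insert w F) : Set (EuclideanSpace ℝ (Fin N)))) = 0 := by
    rw [MeasureTheory.measure_biUnion_null_iff hLfin.countable]
    exact fun F hF => MeasureTheory.Measure.addHaar_affineSubspace _ _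
      (affineSpan_insert_ne_top hF.2 w)
  obtain ⟨q, hqK, hq⟩ : ∃ q ∈ interior K, q ∉ ⋃ F ∈ L, (affineSpan ℝ (insert w F) : Set (EuclideanSpace ℝ (Fin N))) := by
    by_contra! hcon
    have h1 := MeasureTheory.measure_mono_null (μ := MeasureTheory.volume) hcon hnull
    exact (isOpen_interior.measure_pos MeasureTheory.volume hintr).ne' h1
  simp only [mem_iUnion, not_exists] at hq
  obtain ⟨b, hbs, hbK, hbi⟩ : ∃ b ∈ segment ℝ w q, b ∈ K ∧ b ∉ interior K := by
    by_contra! hcon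
    obtain ⟨c, -, hc1, hc2⟩ := (convex_segment w q).isPreconnected (interior K) Kᶜ isOpen_interior
      hKclosed.isOpen_compl (fun x hx => (em (x ∈ K)).imp (hcon x hx) id)
      ⟨q, right_mem_segment ℝ w q, hqK⟩ ⟨w, left_mem_segment ℝ w q, hw⟩
    exact hc2 (interior_subset hc1)
  obtain ⟨f, hf⟩ := geometric_hahn_banach_open_point hKconv.interior isOpen_interior hbi
  have hfK : ∀ x ∈ K, f x ≤ f b := by
    intro x hx
    have hx' : x ∈ closure (interior K) := by
      rw [hKconv.closure_interior_eq_closure_of_nonempty_interior hintr]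
      exact subset_closure hx
    exact closure_minimal (t := {x | f x ≤ f b}) (fun a ha => (hf a ha).le)
      (isClosed_le f.continuous continuous_const) hx'
  have hf0 : f ≠ 0 := by
    rintro rfl
    simpa using hf q hqK
  obtain ⟨α, β, hα, hβ, hαβ, hb⟩ := hbs
  have hα0 : α ≠ 0 := by
    rintro rfl
    have : β = 1 := by linarith
    subst this
    exact hbi (by rw [← hb]; simpa using hqK)
  have hβ0 : β ≠ 0 := by
    rintro rfl
    have : α = 1 := by linarith
    subst this
    exact hw (by simpa [← hb] using hbK)
  set F := {x ∈ K | f x = f b} with hF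
  have hFexp : IsExposed ℝ K F := isExposed_sep hfK
  have hbF : b ∈ F := ⟨hbK, rfl⟩
  refine ⟨F, ⟨hFexp, ⟨b, hbF⟩, ?_⟩, fun l M hl hl0 hlF => ?_⟩
  · rw [adim_of_interior hintr]
    have h1 : ¬ adim F + 1 < N := by
      intro hlt
      refine hq F ⟨⟨hFexp, ⟨b, hbF⟩⟩, hlt⟩ ?_
      have hq' : q = AffineMap.lineMap w b β⁻¹ := by
        have hα' : α = 1 - β := by linarith
        rw [AffineMap.lineMap_apply, ← hb, hα', vsub_eq_sub, vadd_eq_add]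
        have : (1 - β) • w + β • q - w = β • (q - w) := by module
        rw [this, smul_smul, inv_mul_cancel₀ hβ0]
        module
      rw [hq']
      exact AffineMap.lineMap_mem _ (subset_affineSpan ℝ _ (mem_insert w F))
        (subset_affineSpan ℝ _ (mem_insert_of_mem w hbF))
    have h2 : ¬ N ≤ adim F := fun h => hf0 (eq_zero_of_adim (M := f b) (fun x hx => hx.2) h)
    omega
  · have h1 := lt_of_mem_interior hl hl0 hqK
    have h2 := hlF b hbF
    rw [← hb] at h2
    simp only [map_add, map_smul, smul_eq_mul] at h2
    by_contra! hcon
    have hα' : α = 1 - β := by linarith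
    have hβp : 0 < β := lt_of_le_of_ne hβ (Ne.symm hβ0)
    subst hα'
    nlinarith

/-- A point strictly inside all facet inequalities is an interior point. -/
lemma mem_interior_of_facets {S : Set (EuclideanSpace ℝ (Fin N))} (hS : S.Finite)
    (hintr : (interior (convexHull ℝ S)).Nonempty) {w : EuclideanSpace ℝ (Fin N)}
    (hw : ∀ F, IsFacetOf (convexHull ℝ S) F → ∃ (l : StrongDual ℝ (EuclideanSpace ℝ (Fin N))) (M : ℝ),
      (∀ x ∈ convexHull ℝ S, l x ≤ M) ∧ l ≠ 0 ∧ (∀ x ∈ F, l x = M) ∧ l w < M) :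
    w ∈ interior (convexHull ℝ S) := by
  choose! l M h1 h2 h3 h4 using hw
  have hfin : {F | IsFacetOf (convexHull ℝ S) F}.Finite :=
    (finite_faces hS).subset fun F hF => ⟨hF.1, hF.2.1⟩
  rw [mem_interior]
  refine ⟨⋂ F ∈ {F | IsFacetOf (convexHull ℝ S) F}, {x | l F x < M F}, ?_, ?_, ?_⟩
  · intro x hx
    by_contra hxK
    obtain ⟨F, hF, hFl⟩ := exists_facet hS hintr hxK
    have := hFl (l F) (M F) (h1 F hF) (h2 F hF) (h3 F hF)
    simp only [mem_iInter] at hx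
    exact absurd (hx F hF) (not_lt.2 this)
  · exact hfin.isOpen_biInter fun F _ => isOpen_lt (l F).continuous continuous_const
  · simp only [mem_iInter]
    exact fun F hF => h4 F hF

/-- A facet lies in a supporting hyperplane that does not contain the whole set. -/
lemma IsFacetOf.exists_sep {C F : Set (EuclideanSpace ℝ (Fin N))} (hF : IsFacetOf C F) :
    ∃ (l : StrongDual ℝ (EuclideanSpace ℝ (Fin N))) (M : ℝ), (∀ x ∈ C, l x ≤ M) ∧ l ≠ 0 ∧
      (∀ x ∈ F, l x = M) ∧ ∃ x ∈ C, l x < M := by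
  obtain ⟨hexp, hne, hdim⟩ := hF
  obtain ⟨l, M, hl, rfl⟩ := hexp.exists_sep hne
  have hx : ∃ x ∈ C, l x < M := by
    by_contra! hcon
    have : {x ∈ C | l x = M} = C := by
      ext x
      exact ⟨fun hx => hx.1, fun hx => ⟨hx, le_antisymm (hl x hx) (hcon x hx)⟩⟩
    rw [this] at hdim
    omega
  refine ⟨l, M, hl, ?_, fun x hx => hx.2, hx⟩
  rintro rfl
  obtain ⟨x, -, hx⟩ := hx
  obtain ⟨x', -, hx'⟩ := hne
  simp at hx hx'
  linarith

end Facets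

/-! ### A polytope between two parallel facets, with an apex beyond each -/

section Apexes

variable {d : ℕ}

/-- The section of the polytope `conv S` by the hyperplane `v = a`. -/
def slab (S : Set (EuclideanSpace ℝ (Fin (d + 1)))) (v : StrongDual ℝ (EuclideanSpace ℝ (Fin (d + 1)))) (a : ℝ) : Set (EuclideanSpace ℝ (Fin (d + 1))) :=
  convexHull ℝ S ∩ {x | v x = a}

/-- The polytope `conv S` lies between the hyperplanes `v = a` and `v = b`, meets both in
`d`-dimensional sets, and `y`, `z` lie beyond the bottom and the top facet respectively and
beneath all other facets. The intermediate hyperplanes carry no further information. -/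
structure Cfg (S : Set (EuclideanSpace ℝ (Fin (d + 1)))) (v : StrongDual ℝ (EuclideanSpace ℝ (Fin (d + 1)))) (a b : ℝ) (y z : EuclideanSpace ℝ (Fin (d + 1))) : Prop where
  fin : S.Finite
  lo : ∀ x ∈ S, a ≤ v x
  hi : ∀ x ∈ S, v x ≤ b
  hab : a < b
  dlo : adim (slab S v a) = d
  dhi : adim (slab S v b) = d
  nlo : (slab S v a).Nonempty
  nhi : (slab S v b).Nonempty
  ylo : IsBeyond (convexHull ℝ S) (slab S v a) y
  yne : ∀ F, IsFacetOf (convexHull ℝ S) F → F ≠ slab S v a → IsBeneath (convexHull ℝ S) F y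
  zhi : IsBeyond (convexHull ℝ S) (slab S v b) z
  zne : ∀ F, IsFacetOf (convexHull ℝ S) F → F ≠ slab S v b → IsBeneath (convexHull ℝ S) F z

namespace Cfg

variable {S : Set (EuclideanSpace ℝ (Fin (d + 1)))} {v : StrongDual ℝ (EuclideanSpace ℝ (Fin (d + 1)))} {a b : ℝ} {y z : EuclideanSpace ℝ (Fin (d + 1))}

lemma slab_neg (S : Set (EuclideanSpace ℝ (Fin (d + 1)))) (v : StrongDual ℝ (EuclideanSpace ℝ (Fin (d + 1)))) (a : ℝ) : slab S (-v) (-a) = slab S v a := by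
  ext x; simp [slab]

/-- Turning the configuration upside down. -/
lemma symm (h : Cfg S v a b y z) : Cfg S (-v) (-b) (-a) z y where
  fin := h.fin
  lo x hx := by simpa using h.hi x hx
  hi x hx := by simpa using h.lo x hx
  hab := by linarith [h.hab]
  dlo := by rw [slab_neg]; exact h.dhi
  dhi := by rw [slab_neg]; exact h.dlo
  nlo := by rw [slab_neg]; exact h.nhi
  nhi := by rw [slab_neg]; exact h.nlo
  ylo := by rw [slab_neg]; exact h.zhi
  yne := by rw [slab_neg]; exact h.zne
  zhi := by rw [slab_neg]; exact h.ylo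
  zne := by rw [slab_neg]; exact h.yne

lemma hiK (h : Cfg S v a b y z) : ∀ x ∈ convexHull ℝ S, v x ≤ b := le_on_convexHull h.hi

lemma loK (h : Cfg S v a b y z) : ∀ x ∈ convexHull ℝ S, a ≤ v x := by
  simpa using h.symm.hiK

lemma vy (h : Cfg S v a b y z) : v y < a := by
  obtain ⟨x, hx, hxb⟩ := h.nhi
  have := h.ylo.lt (l := -v) (M := -a) (fun x hx => by simpa using hx.2) hx
    (by have : v x = b := hxb
        simp [this, h.hab])
  simpa using this

lemma vz (h : Cfg S v a b y z) : b < v z := by simpa using h.symm.vy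

lemma v_ne (h : Cfg S v a b y z) : v ≠ 0 := by
  rintro rfl
  have h1 := h.vy
  have h2 := h.vz
  have h3 := h.hab
  simp at h1 h2
  linarith

lemma slab_disj (h : Cfg S v a b y z) {x : EuclideanSpace ℝ (Fin (d + 1))} (hx : x ∈ slab S v a) : v x < b := by
  have : v x = a := hx.2
  rw [this]; exact h.hab

lemma slab_ne (h : Cfg S v a b y z) : slab S v a ≠ slab S v b := by
  intro he
  obtain ⟨x, hx⟩ := h.nlo
  exact (h.slab_disj hx).ne (he ▸ hx : x ∈ slab S v b).2

lemma adimK (h : Cfg S v a b y z) : adim (convexHull ℝ S) = d + 1 := by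
  apply le_antisymm
  · have := Submodule.finrank_le (vectorSpan ℝ (convexHull ℝ S))
    rwa [finrank_euclideanSpace_fin] at this
  · obtain ⟨x, hx⟩ := h.nhi
    have hvx : v x = b := hx.2
    have h1 := adim_pyramid h.nlo (l := v) (M := a) (fun x hx => hx.2) (y := x)
      (by rw [hvx]; exact h.hab.ne')
    have h2 : adim (convexHull ℝ (insert x (slab S v a))) ≤ adim (convexHull ℝ S) :=
      adim_mono (convexHull_min (insert_subset hx.1 inter_subset_left) (convex_convexHull ℝ S))
    have h3 := h.dlo
    omega

lemma int (h : Cfg S v a b y z) : (interior (convexHull ℝ S)).Nonempty := by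
  rw [(convex_convexHull ℝ S).interior_nonempty_iff_affineSpan_eq_top]
  obtain ⟨x, hx⟩ := h.nlo
  rw [AffineSubspace.affineSpan_eq_top_iff_vectorSpan_eq_top_of_nonempty ℝ _ _ ⟨x, hx.1⟩]
  apply Submodule.eq_top_of_finrank_eq
  rw [finrank_euclideanSpace_fin]
  exact h.adimK

lemma exposed_hi (h : Cfg S v a b y z) : IsExposed ℝ (convexHull ℝ S) (slab S v b) :=
  isExposed_sep h.hiK

lemma exposed_lo (h : Cfg S v a b y z) : IsExposed ℝ (convexHull ℝ S) (slab S v a) := by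
  simpa [slab_neg] using h.symm.exposed_hi

/-- Points of `[x, y]` above the bottom hyperplane, other than `x`, are interior. -/
lemma interior_y (h : Cfg S v a b y z) {x : EuclideanSpace ℝ (Fin (d + 1))} (hx : x ∈ convexHull ℝ S) {ε : ℝ} (h0 : 0 < ε)
    (h1 : ε ≤ 1) (hv : a < v (x + ε • (y - x))) :
    x + ε • (y - x) ∈ interior (convexHull ℝ S) := by
  apply mem_interior_of_facets h.fin h.int
  intro F hF
  by_cases hFe : F = slab S v a
  · refine ⟨-v, -a, fun x hx => by simpa using h.loK x hx, by simpa using h.v_ne, ?_, by simpa using hv⟩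
    rw [hFe]
    exact fun x hx => by simpa using hx.2
  · obtain ⟨l, M, hl, hl0, hlF, x0, hx0, hlx0⟩ := hF.exists_sep
    refine ⟨l, M, hl, hl0, hlF, ?_⟩
    have h2 := (h.yne F hF hFe).lt hlF hx0 hlx0
    have h3 := hl x hx
    simp only [map_add, map_smul, map_sub, smul_eq_mul]
    nlinarith

/-- A hyperplane supporting the polytope at a point off the bottom facet has `y` strictly on its
inner side. -/
lemma lt_y (h : Cfg S v a b y z) {l : StrongDual ℝ (EuclideanSpace ℝ (Fin (d + 1)))} (hl0 : l ≠ 0) {x : EuclideanSpace ℝ (Fin (d + 1))}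
    (hx : x ∈ convexHull ℝ S) (hvx : a < v x) (hl : ∀ x' ∈ convexHull ℝ S, l x' ≤ l x) :
    l y < l x := by
  have hvy := h.vy
  -- `ε` is chosen so that the point lies halfway between the levels `a` and `v x`.
  set ε := (v x - a) / (2 * (v x - v y)) with hε
  have hden : 0 < 2 * (v x - v y) := by linarith
  have hεv : ε * (v x - v y) = (v x - a) / 2 := by
    rw [hε]
    have : v x - v y ≠ 0 := by linarith
    field_simp
  have hε0 : 0 < ε := div_pos (by linarith) hden
  have hε1 : ε ≤ 1 := by rw [hε, div_le_one hden]; linarith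
  have h1 := h.interior_y hx hε0 hε1 (by
    simp only [map_add, map_smul, map_sub, smul_eq_mul]; nlinarith)
  have h2 := lt_of_mem_interior hl hl0 h1
  simp only [map_add, map_smul, map_sub, smul_eq_mul] at h2
  nlinarith

lemma lt_z (h : Cfg S v a b y z) {l : StrongDual ℝ (EuclideanSpace ℝ (Fin (d + 1)))} (hl0 : l ≠ 0) {x : EuclideanSpace ℝ (Fin (d + 1))}
    (hx : x ∈ convexHull ℝ S) (hvx : v x < b) (hl : ∀ x' ∈ convexHull ℝ S, l x' ≤ l x) :
    l z < l x :=
  h.symm.lt_y hl0 hx (by simpa using hvx) hl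

/-- The segment `[y, z]` meets the interior of the polytope. -/
lemma segment_interior (h : Cfg S v a b y z) :
    ∃ α β : ℝ, 0 < α ∧ 0 < β ∧ α + β = 1 ∧ α • y + β • z ∈ interior (convexHull ℝ S) := by
  have hy := h.vy
  have hz := h.vz
  have hab := h.hab
  have hden : 0 < v z - v y := by linarith
  have hne : v z - v y ≠ 0 := hden.ne'
  set c := (a + b) / 2 with hc
  have hα : 0 < (v z - c) / (v z - v y) := div_pos (by linarith) hden
  have hβ : 0 < (c - v y) / (v z - v y) := div_pos (by linarith) hden
  have hsum : (v z - c) / (v z - v y) + (c - v y) / (v z - v y) = 1 := by field_simp; ring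
  have hv : (v z - c) / (v z - v y) * v y + (c - v y) / (v z - v y) * v z = c := by
    field_simp; ring
  refine ⟨(v z - c) / (v z - v y), (c - v y) / (v z - v y), hα, hβ, hsum, ?_⟩
  generalize (v z - c) / (v z - v y) = α at *
  generalize (c - v y) / (v z - v y) = β at *
  apply mem_interior_of_facets h.fin h.int
  intro F hF
  by_cases hFa : F = slab S v a
  · refine ⟨-v, -a, fun x hx => by simpa using h.loK x hx, by simpa using h.v_ne, ?_, ?_⟩
    · rw [hFa]
      exact fun x hx => by simpa using hx.2
    · simp; linarith
  by_cases hFb : F = slab S v b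
  · refine ⟨v, b, h.hiK, h.v_ne, ?_, ?_⟩
    · rw [hFb]
      exact fun x hx => hx.2
    · simp; linarith
  obtain ⟨l, M, hl, hl0, hlF, x0, hx0, hlx0⟩ := hF.exists_sep
  refine ⟨l, M, hl, hl0, hlF, ?_⟩
  have h2 := (h.yne F hF hFa).lt hlF hx0 hlx0
  have h3 := (h.zne F hF hFb).lt hlF hx0 hlx0
  have hβ' : β = 1 - α := by linarith
  subst hβ'
  simp only [map_add, map_smul, smul_eq_mul]
  nlinarith

/-- Let `G = {x ∈ slab | l x = M}` be a nonempty proper face of the bottom facet. Tilting the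
hyperplane of `l` about the bottom one, i.e. passing to `l + s • v`, gives supporting hyperplanes
of the polytope through exactly `G` for all `s` below a threshold `s₀`; at the threshold the
hyperplane touches the polytope off the bottom facet, so `y` lies strictly inside it. -/
lemma tilt (h : Cfg S v a b y z) {l : StrongDual ℝ (EuclideanSpace ℝ (Fin (d + 1)))} {M : ℝ}
    (hl : ∀ x ∈ slab S v a, l x ≤ M) (hG : {x ∈ slab S v a | l x = M}.Nonempty)
    (hGne : {x ∈ slab S v a | l x = M} ≠ slab S v a) :
    ∃ s₀ : ℝ, l y + s₀ * v y < M + s₀ * a ∧ ∀ s < s₀,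
      (∀ x ∈ convexHull ℝ S, (l + s • v) x ≤ M + s * a) ∧
      {x ∈ convexHull ℝ S | (l + s • v) x = M + s * a} = {x ∈ slab S v a | l x = M} ∧
      (l + s • v) z < M + s * a := by
  have hl0 : ∀ s : ℝ, l + s • v ≠ 0 := by
    intro s hs
    obtain ⟨g, hg, hgM⟩ := hG
    apply hGne
    ext x
    refine ⟨fun hx => hx.1, fun hx => ⟨hx, ?_⟩⟩
    have h1 : l g + s * v g = 0 := by simpa using congrArg (fun f => f g) hs
    have h2 : l x + s * v x = 0 := by simpa using congrArg (fun f => f x) hs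
    have h3 : v g = a := hg.2
    have h4 : v x = a := hx.2
    rw [h3] at h1
    rw [h4] at h2
    linarith
  have hTne : {p ∈ S | a < v p}.Nonempty := by
    by_contra! hcon
    obtain ⟨x, hx, hxb⟩ := h.nhi
    have hxb : v x = b := hxb
    have := le_on_convexHull (l := v) (M := a) (S := S) (fun p hp => by
      by_contra! hlt
      have : p ∈ {p ∈ S | a < v p} := ⟨hp, hlt⟩
      rw [hcon] at this
      exact this) x hx
    linarith [h.hab]
  obtain ⟨p₀, hp₀, hmin⟩ := Set.exists_min_image {p ∈ S | a < v p}
    (fun p => (M - l p) / (v p - a)) (h.fin.subset fun p hp => hp.1) hTne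
  set s₀ := (M - l p₀) / (v p₀ - a) with hs₀
  have hp₀v : 0 < v p₀ - a := by linarith [hp₀.2]
  have hp₀e : l p₀ + s₀ * v p₀ = M + s₀ * a := by
    have : s₀ * (v p₀ - a) = M - l p₀ := by rw [hs₀]; field_simp
    linarith
  have hSle : ∀ x ∈ S, (l + s₀ • v) x ≤ M + s₀ * a := by
    intro x hx
    simp only [add_apply, smul_apply, smul_eq_mul]
    rcases (h.lo x hx).eq_or_lt with he | hlt
    · have := hl x ⟨subset_convexHull ℝ S hx, he.symm⟩
      rw [← he]; linarith
    · have h1 := hmin x ⟨hx, hlt⟩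
      rw [le_div_iff₀ (by linarith)] at h1
      linarith
  have hKle := le_on_convexHull hSle
  have hp₀e' : (l + s₀ • v) p₀ = M + s₀ * a := by simpa using hp₀e
  refine ⟨s₀, ?_, fun s hs => ?_⟩
  · have := h.lt_y (hl0 s₀) (subset_convexHull ℝ S hp₀.1) hp₀.2 (by rw [hp₀e']; exact hKle)
    rw [hp₀e'] at this
    simpa using this
  · simp only [add_apply, smul_apply, smul_eq_mul] at hKle
    have hle : ∀ x ∈ convexHull ℝ S, (l + s • v) x ≤ M + s * a := by
      intro x hx
      have h1 := hKle x hx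
      have h2 := h.loK x hx
      simp only [add_apply, smul_apply, smul_eq_mul]
      nlinarith
    have heq : {x ∈ convexHull ℝ S | (l + s • v) x = M + s * a} =
        {x ∈ slab S v a | l x = M} := by
      ext x
      simp only [mem_sep_iff, add_apply, smul_apply, smul_eq_mul]
      constructor
      · rintro ⟨hx, he⟩
        have h1 := hKle x hx
        have h2 := h.loK x hx
        have h3 : v x = a := by
          apply le_antisymm _ h2
          by_contra! hlt
          nlinarith
        refine ⟨⟨hx, h3⟩, ?_⟩
        rw [h3] at he
        linarith
      · rintro ⟨⟨hx, hxa⟩, he⟩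
        have hxa : v x = a := hxa
        exact ⟨hx, by rw [hxa, he]⟩
    refine ⟨hle, heq, ?_⟩
    obtain ⟨g, hg⟩ := hG
    have hgv := h.slab_disj hg.1
    rw [← heq] at hg
    have := h.lt_z (hl0 s) hg.1 hgv (by rw [hg.2]; exact hle)
    rwa [hg.2] at this

/-! ### Faces of the polytope with the two apexes added -/

lemma le_on_Q {l : StrongDual ℝ (EuclideanSpace ℝ (Fin (d + 1)))} {M : ℝ}
    (hl : ∀ x ∈ convexHull ℝ S, l x ≤ M) (hy : l y ≤ M) (hz : l z ≤ M) :
    ∀ x ∈ S ∪ {y, z}, l x ≤ M := by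
  rintro x (hx | rfl | rfl)
  · exact hl x (subset_convexHull ℝ S hx)
  · exact hy
  · exact hz

lemma face_base {l : StrongDual ℝ (EuclideanSpace ℝ (Fin (d + 1)))} {M : ℝ}
    (hl : ∀ x ∈ convexHull ℝ S, l x ≤ M) (hy : l y < M) (hz : l z < M) :
    {x ∈ convexHull ℝ (S ∪ {y, z}) | l x = M} = {x ∈ convexHull ℝ S | l x = M} := by
  rw [sep_convexHull (le_on_Q hl hy.le hz.le),
    sep_convexHull fun x hx => hl x (subset_convexHull ℝ S hx)]
  congr 1
  ext x
  constructor
  · rintro ⟨hx | rfl | rfl, he⟩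
    · exact ⟨hx, he⟩
    · exact absurd he hy.ne
    · exact absurd he hz.ne
  · exact fun hx => ⟨Or.inl hx.1, hx.2⟩

lemma face_apex {l : StrongDual ℝ (EuclideanSpace ℝ (Fin (d + 1)))} {M : ℝ}
    (hl : ∀ x ∈ convexHull ℝ S, l x ≤ M) (hy : l y = M) (hz : l z < M) :
    {x ∈ convexHull ℝ (S ∪ {y, z}) | l x = M} =
      convexHull ℝ (insert y {x ∈ convexHull ℝ S | l x = M}) := by
  rw [sep_convexHull (le_on_Q hl hy.le hz.le),
    sep_convexHull fun x hx => hl x (subset_convexHull ℝ S hx),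
    insert_eq y (convexHull ℝ _), convexHull_convexHull_union_right]
  congr 1
  ext x
  constructor
  · rintro ⟨hx | rfl | rfl, he⟩
    · exact Or.inr ⟨hx, he⟩
    · exact Or.inl rfl
    · exact absurd he hz.ne
  · rintro (rfl | hx)
    · exact ⟨Or.inr (Or.inl rfl), hy⟩
    · exact ⟨Or.inl hx.1, hx.2⟩

/-- For a proper face `G` of the bottom facet, both `G` itself and the pyramid over `G` with
apex `y` are faces of the enlarged polytope: the hyperplane through `G` can be tilted until it
passes through `y`, or stopped a little earlier. -/
lemma exposed_of_slab (h : Cfg S v a b y z) {G : Set (EuclideanSpace ℝ (Fin (d + 1)))}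
    (hG : IsExposed ℝ (slab S v a) G) (hne : G.Nonempty) (hGne : G ≠ slab S v a) :
    IsExposed ℝ (convexHull ℝ (S ∪ {y, z})) G ∧
      IsExposed ℝ (convexHull ℝ (S ∪ {y, z})) (convexHull ℝ (insert y G)) := by
  obtain ⟨l, M, hl, rfl⟩ := hG.exists_sep hne
  obtain ⟨s₀, hs₀, H⟩ := h.tilt hl hne hGne
  have hy := h.vy
  have hden : 0 < a - v y := by linarith
  -- The tilt at which the hyperplane passes through `y`.
  set s₁ := (l y - M) / (a - v y) with hs₁
  have hs₁e : s₁ * (a - v y) = l y - M := by rw [hs₁]; field_simp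
  have hlt : s₁ < s₀ := by
    rw [hs₁, div_lt_iff₀ hden]; linarith
  constructor
  · obtain ⟨h1, h2, h3⟩ := H ((s₁ + s₀) / 2) (by linarith)
    have h4 : (l + ((s₁ + s₀) / 2) • v) y < M + (s₁ + s₀) / 2 * a := by
      simp only [add_apply, smul_apply, smul_eq_mul]
      nlinarith
    rw [← h2, ← face_base h1 h4 h3]
    exact isExposed_sep (le_on_convexHull (le_on_Q h1 h4.le h3.le))
  · obtain ⟨h1, h2, h3⟩ := H s₁ hlt
    have h4 : (l + s₁ • v) y = M + s₁ * a := by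
      simp only [add_apply, smul_apply, smul_eq_mul]
      linarith
    rw [← h2, ← face_apex h1 h4 h3]
    exact isExposed_sep (le_on_convexHull (le_on_Q h1 h4.le h3.le))

lemma exposed_base (h : Cfg S v a b y z) {F : Set (EuclideanSpace ℝ (Fin (d + 1)))}
    (hF : IsExposed ℝ (convexHull ℝ S) F) (hne : F.Nonempty) (hFK : F ≠ convexHull ℝ S)
    (hFa : F ≠ slab S v a) (hFb : F ≠ slab S v b) :
    IsExposed ℝ (convexHull ℝ (S ∪ {y, z})) F := by
  by_cases ha : F ⊆ slab S v a
  · exact (h.exposed_of_slab (hF.mono inter_subset_left ha) hne hFa).1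
  by_cases hb : F ⊆ slab S v b
  · have := (h.symm.exposed_of_slab (G := F) (by rw [slab_neg]; exact hF.mono inter_subset_left hb)
      hne (by rwa [slab_neg])).1
    rwa [pair_comm] at this
  obtain ⟨l, M, hl, rfl⟩ := hF.exists_sep hne
  have hl0 : l ≠ 0 := by
    rintro rfl
    obtain ⟨x, -, hx⟩ := hne
    apply hFK
    ext x'
    exact ⟨fun h => h.1, fun h => ⟨h, hx⟩⟩
  obtain ⟨x₁, hx₁, hx₁a⟩ := not_subset.1 ha
  obtain ⟨x₂, hx₂, hx₂b⟩ := not_subset.1 hb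
  have hly : l y < M := by
    have := h.lt_y hl0 hx₁.1 (lt_of_le_of_ne (h.loK _ hx₁.1) fun he => hx₁a ⟨hx₁.1, he.symm⟩)
      (by rw [hx₁.2]; exact hl)
    rwa [hx₁.2] at this
  have hlz : l z < M := by
    have := h.lt_z hl0 hx₂.1 (lt_of_le_of_ne (h.hiK _ hx₂.1) fun he => hx₂b ⟨hx₂.1, he⟩)
      (by rw [hx₂.2]; exact hl)
    rwa [hx₂.2] at this
  rw [← face_base hl hly hlz]
  exact isExposed_sep (le_on_convexHull (le_on_Q hl hly.le hlz.le))

/-- The `k`-dimensional pyramids with apex `y` over proper faces of `C`, the pyramid over the empty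
face being `{y}`. -/
def _root_.apexFaces (C : Set (EuclideanSpace ℝ (Fin (d + 1))))
    (y : EuclideanSpace ℝ (Fin (d + 1))) (k : ℕ) : Set (Set (EuclideanSpace ℝ (Fin (d + 1)))) :=
  {E | (k = 0 ∧ E = {y}) ∨ ∃ G, (IsExposed ℝ C G ∧ G.Nonempty ∧ G ≠ C ∧ adim G + 1 = k) ∧
    E = convexHull ℝ (insert y G)}

lemma adim_pyramid_slab (h : Cfg S v a b y z) {G : Set (EuclideanSpace ℝ (Fin (d + 1)))}
    (hG : IsExposed ℝ (slab S v a) G) (hne : G.Nonempty) :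
    adim (convexHull ℝ (insert y G)) = adim G + 1 :=
  adim_pyramid hne (l := v) (M := a) (fun _ hx => (hG.subset hx).2) h.vy.ne

lemma adim_singleton (x : EuclideanSpace ℝ (Fin (d + 1))) : adim {x} = 0 := by
  simp [adim]

lemma exposed_singleton (h : Cfg S v a b y z) :
    IsExposed ℝ (convexHull ℝ (S ∪ {y, z})) {y} := by
  have hy := h.vy
  have hz := h.vz
  have hab := h.hab
  have h1 : ∀ x ∈ convexHull ℝ S, (-v) x ≤ -v y := by
    intro x hx
    have := h.loK x hx
    simp only [neg_apply]
    linarith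
  have h3 : (-v) z < -v y := by
    simp only [neg_apply]
    linarith
  have h4 := face_apex h1 rfl h3
  have h5 : {x ∈ convexHull ℝ S | (-v) x = -v y} = ∅ := by
    ext x
    simp only [mem_sep_iff, neg_apply, neg_inj, mem_empty_iff_false, iff_false, not_and]
    intro hx he
    have := h.loK x hx
    linarith
  rw [h5, insert_empty_eq, convexHull_singleton] at h4
  rw [← h4]
  exact isExposed_sep (le_on_convexHull (le_on_Q h1 le_rfl h3.le))

lemma exposed_of_apexFaces (h : Cfg S v a b y z) {k : ℕ}
    {E : Set (EuclideanSpace ℝ (Fin (d + 1)))} (hE : E ∈ apexFaces (slab S v a) y k) :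
    IsExposed ℝ (convexHull ℝ (S ∪ {y, z})) E ∧ E.Nonempty ∧ adim E = k := by
  rcases hE with ⟨rfl, rfl⟩ | ⟨G, ⟨hG, hne, hGne, hk⟩, rfl⟩
  · exact ⟨h.exposed_singleton, singleton_nonempty y, adim_singleton y⟩
  · exact ⟨(h.exposed_of_slab hG hne hGne).2, (insert_nonempty y G).convexHull,
      by rw [h.adim_pyramid_slab hG hne, hk]⟩

lemma mem_of_apexFaces {C E : Set (EuclideanSpace ℝ (Fin (d + 1)))} {k : ℕ}
    (hE : E ∈ apexFaces C y k) : y ∈ E := by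
  rcases hE with ⟨rfl, rfl⟩ | ⟨G, -, rfl⟩
  · rfl
  · exact subset_convexHull ℝ _ (mem_insert y G)

lemma le_of_apexFaces (h : Cfg S v a b y z) {k : ℕ}
    {E : Set (EuclideanSpace ℝ (Fin (d + 1)))} (hE : E ∈ apexFaces (slab S v a) y k) :
    ∀ x ∈ E, v x ≤ a := by
  rcases hE with ⟨rfl, rfl⟩ | ⟨G, ⟨hG, -⟩, rfl⟩
  · rintro x rfl
    exact h.vy.le
  · apply le_on_convexHull
    rintro x (rfl | hx)
    · exact h.vy.le
    · exact le_of_eq (hG.subset hx).2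

lemma face_of_apex (h : Cfg S v a b y z) {l : StrongDual ℝ (EuclideanSpace ℝ (Fin (d + 1)))}
    {M : ℝ} (hl0 : l ≠ 0) (hl : ∀ x ∈ convexHull ℝ S, l x ≤ M) (hy : l y = M) (hz : l z < M) :
    {x ∈ convexHull ℝ (S ∪ {y, z}) | l x = M} ∈ apexFaces (slab S v a) y
      (adim {x ∈ convexHull ℝ (S ∪ {y, z}) | l x = M}) := by
  rw [face_apex hl hy hz]
  rcases eq_empty_or_nonempty {x ∈ convexHull ℝ S | l x = M} with he | hne
  · rw [he, insert_empty_eq, convexHull_singleton]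
    exact Or.inl ⟨adim_singleton y, rfl⟩
  have heq : {x ∈ convexHull ℝ S | l x = M} = {x ∈ slab S v a | l x = M} := by
    ext x
    refine ⟨fun hx => ⟨⟨hx.1, ?_⟩, hx.2⟩, fun hx => ⟨hx.1.1, hx.2⟩⟩
    by_contra hxa
    have := h.lt_y hl0 hx.1 (lt_of_le_of_ne (h.loK _ hx.1) fun he => hxa he.symm)
      (by rw [hx.2]; exact hl)
    linarith [hx.2]
  rw [heq] at hne ⊢
  have hexp : IsExposed ℝ (slab S v a) {x ∈ slab S v a | l x = M} :=
    isExposed_sep fun x hx => hl x hx.1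
  refine Or.inr ⟨_, ⟨hexp, hne, fun he => ?_, (h.adim_pyramid_slab hexp hne).symm⟩, rfl⟩
  obtain ⟨q, hq⟩ := h.int
  have := h.ylo.lt (l := l) (M := M) (fun x hx => by rw [← he] at hx; exact hx.2)
    (interior_subset hq) (lt_of_mem_interior hl hl0 hq)
  linarith

/-- Every proper face of the enlarged polytope is a face of the original one other than the two
parallel facets, or a pyramid with apex `y` or `z`. -/
lemma faces_Q (h : Cfg S v a b y z) {E : Set (EuclideanSpace ℝ (Fin (d + 1)))}
    (hE : IsExposed ℝ (convexHull ℝ (S ∪ {y, z})) E) (hne : E.Nonempty) (hdim : adim E ≤ d) :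
    (IsExposed ℝ (convexHull ℝ S) E ∧ E ≠ slab S v a ∧ E ≠ slab S v b) ∨
      E ∈ apexFaces (slab S v a) y (adim E) ∨ E ∈ apexFaces (slab S v b) z (adim E) := by
  obtain ⟨l, M, hlQ, rfl⟩ := hE.exists_sep hne
  have hsub : convexHull ℝ S ⊆ convexHull ℝ (S ∪ {y, z}) := convexHull_mono subset_union_left
  have hl : ∀ x ∈ convexHull ℝ S, l x ≤ M := fun x hx => hlQ x (hsub hx)
  have hly : l y ≤ M := hlQ y (subset_convexHull ℝ _ (by simp))
  have hlz : l z ≤ M := hlQ z (subset_convexHull ℝ _ (by simp))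
  have hl0 : l ≠ 0 := by
    rintro rfl
    obtain ⟨x, -, hx⟩ := hne
    have h1 : adim (convexHull ℝ S) ≤
        adim {x ∈ convexHull ℝ (S ∪ {y, z}) |
          (0 : StrongDual ℝ (EuclideanSpace ℝ (Fin (d + 1)))) x = M} :=
      adim_mono fun x' hx' => ⟨hsub hx', hx⟩
    have h2 := h.adimK
    omega
  obtain ⟨q, hq⟩ := h.int
  have hqM := lt_of_mem_interior hl hl0 hq
  rcases hly.lt_or_eq with hly | hly <;> rcases hlz.lt_or_eq with hlz | hlz
  · left
    rw [face_base hl hly hlz]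
    refine ⟨isExposed_sep hl, fun he => ?_, fun he => ?_⟩
    · have := h.ylo.lt (l := l) (M := M) (fun x hx => by rw [← he] at hx; exact hx.2)
        (interior_subset hq) hqM
      linarith
    · have := h.zhi.lt (l := l) (M := M) (fun x hx => by rw [← he] at hx; exact hx.2)
        (interior_subset hq) hqM
      linarith
  · right; right
    have := h.symm.face_of_apex hl0 hl hlz hly
    rwa [slab_neg, pair_comm] at this
  · exact Or.inr (Or.inl (h.face_of_apex hl0 hl hly hlz))
  · exfalso
    obtain ⟨α, β, -, -, hαβ, hp⟩ := h.segment_interior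
    have := lt_of_mem_interior hl hl0 hp
    simp only [map_add, map_smul, smul_eq_mul, hly, hlz, ← add_mul, hαβ, one_mul] at this
    exact lt_irrefl _ this

/-! ### Counting -/

lemma ncard_apexFaces (h : Cfg S v a b y z) (k : ℕ) :
    (apexFaces (slab S v a) y k).ncard = if k = 0 then 1 else bCount (slab S v a) (k - 1) := by
  rcases k with _ | k
  · have : apexFaces (slab S v a) y 0 = {{y}} := by
      ext E
      simp [apexFaces]
    rw [this]
    simp
  · have : apexFaces (slab S v a) y (k + 1) = (fun G => convexHull ℝ (insert y G)) ''
        {G | IsExposed ℝ (slab S v a) G ∧ G.Nonempty ∧ G ≠ slab S v a ∧ adim G = k} := by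
      ext E
      simp [apexFaces, eq_comm]
    rw [this, InjOn.ncard_image]
    · simp [bCount]
    · -- The base of a pyramid is its section with the bottom hyperplane.
      have key : ∀ G, IsExposed ℝ (slab S v a) G →
          {x ∈ convexHull ℝ (insert y G) | v x = a} = G := by
        intro G hG
        have hconv : Convex ℝ G := hG.convex ((convex_convexHull ℝ S).inter
          (convex_hyperplane v.toLinearMap.isLinear a))
        rw [sep_convexHull]
        · convert hconv.convexHull_eq using 2
          ext x
          constructor
          · rintro ⟨rfl | hx, he⟩
            · exact absurd he h.vy.ne
            · exact hx
          · exact fun hx => ⟨Or.inr hx, (hG.subset hx).2⟩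
        · rintro x (rfl | hx)
          · exact h.vy.le
          · exact le_of_eq (hG.subset hx).2
      intro G hG G' hG' he
      simp only at he
      rw [← key G hG.1, he, key G' hG'.1]

lemma count (h : Cfg S v a b y z) {k : ℕ} (hk : k ≤ d) :
    fCount (convexHull ℝ (S ∪ {y, z})) k + (if k = d then 2 else 0) =
      fCount (convexHull ℝ S) k + (if k = 0 then 1 else bCount (slab S v a) (k - 1)) +
        (if k = 0 then 1 else bCount (slab S v b) (k - 1)) := by
  have hz := h.symm.ncard_apexFaces k
  rw [slab_neg] at hz
  rw [← h.ncard_apexFaces k, ← hz]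
  unfold fCount
  set A := {F | IsExposed ℝ (convexHull ℝ (S ∪ {y, z})) F ∧ F.Nonempty ∧ adim F = k} with hA
  set B := {F | IsExposed ℝ (convexHull ℝ S) F ∧ F.Nonempty ∧ adim F = k} with hB
  set Y := apexFaces (slab S v a) y k with hY
  set Z := apexFaces (slab S v b) z k with hZ
  have hYA : Y ⊆ A := fun E hE => h.exposed_of_apexFaces hE
  have hZA : Z ⊆ A := fun E hE => by
    have := h.symm.exposed_of_apexFaces (k := k) (E := E) (by rwa [slab_neg])
    rwa [pair_comm] at this
  have hAfin : A.Finite := (finite_faces (h.fin.union (by simp))).subset fun F hF => ⟨hF.1, hF.2.1⟩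
  have hBfin : B.Finite := (finite_faces h.fin).subset fun F hF => ⟨hF.1, hF.2.1⟩
  have hAeq : A = (B \ {slab S v a, slab S v b}) ∪ (Y ∪ Z) := by
    apply Subset.antisymm
    · rintro E ⟨hE, hne, hd⟩
      rcases h.faces_Q hE hne (hd ▸ hk) with ⟨h1, h2, h3⟩ | h1 | h1
      · exact Or.inl ⟨⟨h1, hne, hd⟩, by simp [h2, h3]⟩
      · exact Or.inr (Or.inl (by rw [hd] at h1; exact h1))
      · exact Or.inr (Or.inr (by rw [hd] at h1; exact h1))
    · refine union_subset ?_ (union_subset hYA hZA)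
      rintro F ⟨⟨hF, hne, hd⟩, hn⟩
      simp only [mem_insert_iff, mem_singleton_iff, not_or] at hn
      refine ⟨h.exposed_base hF hne ?_ hn.1 hn.2, hne, hd⟩
      rintro rfl
      have := h.adimK
      omega
  have hyK : y ∉ convexHull ℝ S := fun hy => absurd (h.loK y hy) (not_le.2 h.vy)
  have hzK : z ∉ convexHull ℝ S := fun hz => absurd (h.hiK z hz) (not_le.2 h.vz)
  have hYZ : Disjoint Y Z := by
    rw [disjoint_left]
    intro E hEY hEZ
    have h1 := h.le_of_apexFaces hEY z (mem_of_apexFaces hEZ)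
    linarith [h.vz, h.hab]
  have hBYZ : Disjoint (B \ {slab S v a, slab S v b}) (Y ∪ Z) := by
    rw [disjoint_left]
    rintro E ⟨⟨hE, -⟩, -⟩ (hEY | hEZ)
    · exact hyK (hE.subset (mem_of_apexFaces hEY))
    · exact hzK (hE.subset (mem_of_apexFaces hEZ))
  have hcB : (B \ {slab S v a, slab S v b}).ncard + (if k = d then 2 else 0) = B.ncard := by
    split_ifs with hkd
    · have hsub : {slab S v a, slab S v b} ⊆ B := by
        rintro F (rfl | rfl)
        · exact ⟨h.exposed_lo, h.nlo, hkd ▸ h.dlo⟩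
        · exact ⟨h.exposed_hi, h.nhi, hkd ▸ h.dhi⟩
      rw [← ncard_pair h.slab_ne]
      exact ncard_sdiff_add_ncard_of_subset hsub hBfin
    · rw [add_zero]
      congr 1
      rw [sdiff_eq_left, disjoint_right]
      rintro F (rfl | rfl) ⟨-, -, hd⟩
      · exact hkd (hd.symm.trans h.dlo)
      · exact hkd (hd.symm.trans h.dhi)
  rw [hAeq, ncard_union_eq hBYZ (hBfin.sdiff) ((hAfin.subset hYA).union (hAfin.subset hZA)),
    ncard_union_eq hYZ (hAfin.subset hYA) (hAfin.subset hZA)]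
  omega

end Cfg

end Apexes

theorem stmt8 (d m : ℕ) (hd : 2 ≤ d) (hm : 2 ≤ m)
    (u : EuclideanSpace ℝ (Fin (d + 1))) (hu : ‖u‖ = 1)
    (t : Fin m → ℝ) (ht : StrictMono t)
    (P : Fin m → Set (EuclideanSpace ℝ (Fin (d + 1))))
    (hfin : ∀ i, (P i).Finite)
    (hsub : ∀ i, P i ⊆ {x | ⟪x, u⟫ = t i})
    (hdim : ∀ i, adim (convexHull ℝ (P i)) = d)
    (KP KP1 KPm Q : Set (EuclideanSpace ℝ (Fin (d + 1))))
    (hKP : KP = convexHull ℝ (⋃ i, P i))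
    (hKP1 : KP1 = KP ∩ {x | ⟪x, u⟫ = t ⟨0, by omega⟩})
    (hKPm : KPm = KP ∩ {x | ⟪x, u⟫ = t ⟨m - 1, by omega⟩})
    (y z : EuclideanSpace ℝ (Fin (d + 1)))
    (hy₁ : IsBeyond KP KP1 y)
    (hy₂ : ∀ F, IsFacetOf KP F → F ≠ KP1 → IsBeneath KP F y)
    (hz₁ : IsBeyond KP KPm z)
    (hz₂ : ∀ F, IsFacetOf KP F → F ≠ KPm → IsBeneath KP F z)
    (hQ : Q = convexHull ℝ ((⋃ i, P i) ∪ {y, z})) :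
    ∀ k ≤ d,
      fCount Q k + (if k = d then 2 else 0) =
        fCount KP k + (if k = 0 then 1 else bCount KP1 (k - 1)) +
          (if k = 0 then 1 else bCount KPm (k - 1)) := by

  have hinner : ∀ x, innerSL ℝ u x = ⟪x, u⟫ := fun x => by
    rw [innerSL_apply_apply, real_inner_comm]
  set i₀ : Fin m := ⟨0, by omega⟩ with hi₀
  set i₁ : Fin m := ⟨m - 1, by omega⟩ with hi₁
  have hslab : ∀ i, slab (⋃ i, P i) (innerSL ℝ u) (t i) = KP ∩ {x | ⟪x, u⟫ = t i} := by
    intro i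
    simp only [slab, hinner, hKP]
  have hPsub : ∀ i, convexHull ℝ (P i) ⊆ slab (⋃ i, P i) (innerSL ℝ u) (t i) := by
    intro i
    refine subset_inter (convexHull_mono (subset_iUnion P i)) (convexHull_min (fun x hx => ?_)
      (convex_hyperplane (innerSL ℝ u).toLinearMap.isLinear (t i)))
    exact (hinner x).trans (hsub i hx)
  have hu0 : innerSL ℝ u ≠ 0 := by
    intro h0
    have h1 := hinner u
    rw [h0, real_inner_self_eq_norm_sq, hu] at h1
    simp at h1
  have hslabdim : ∀ i, adim (slab (⋃ i, P i) (innerSL ℝ u) (t i)) = d := by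
    intro i
    have h1 := adim_mono (hPsub i)
    rw [hdim i] at h1
    have h2 : ¬ d + 1 ≤ adim (slab (⋃ i, P i) (innerSL ℝ u) (t i)) := fun hle =>
      hu0 (eq_zero_of_adim (M := t i) (fun x hx => hx.2) hle)
    omega
  have hslabne : ∀ i, (slab (⋃ i, P i) (innerSL ℝ u) (t i)).Nonempty := by
    intro i
    by_contra! hcon
    have h1 := hslabdim i
    rw [hcon] at h1
    rw [adim, vectorSpan_empty, finrank_bot] at h1
    omega
  have e₁ : KP1 = slab (⋃ i, P i) (innerSL ℝ u) (t i₀) := by rw [hslab, hKP1]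
  have em : KPm = slab (⋃ i, P i) (innerSL ℝ u) (t i₁) := by rw [hslab, hKPm]
  have hcfg : Cfg (⋃ i, P i) (innerSL ℝ u) (t i₀) (t i₁) y z := by
    subst hKP
    rw [e₁] at hy₁ hy₂
    rw [em] at hz₁ hz₂
    refine ⟨finite_iUnion hfin, ?_, ?_, ht (Fin.mk_lt_mk.2 (by omega)), hslabdim _, hslabdim _,
      hslabne _, hslabne _, hy₁, hy₂, hz₁, hz₂⟩
    · intro x hx
      obtain ⟨i, hi⟩ := mem_iUnion.1 hx
      rw [hinner, show ⟪x, u⟫ = t i from hsub i hi]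
      exact ht.monotone (Fin.le_def.2 (Nat.zero_le _))
    · intro x hx
      obtain ⟨i, hi⟩ := mem_iUnion.1 hx
      rw [hinner, show ⟪x, u⟫ = t i from hsub i hi]
      exact ht.monotone (Fin.le_def.2 (by simp only [hi₁]; omega))
  intro k hk
  rw [hQ, hKP, e₁, em]
  exact hcfg.count hk
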